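/- Let G be a group, E a Riesz space, and ρ : G → Aut⁺(E) a positive representation. Then ρ is order indecomposable if and only if ρ is projection band irreducible. -/

import Mathlib

/-!
Order direct summands and projection bands are the same subspaces. In an order decomposition
`E = L ⊕ M` the order is componentwise, so `|x| ≤ u` with `u ∈ L` forces the `M`-component of `x`
to vanish; hence `L` and `M` are disjoint ideals, and similarly `L` is closed under suprema.
Conversely `B` and `Bᵈ` are disjoint, so the components of a positive element are positive. The
complement `Bᵈ` inherits invariance from `B` because lattice automorphisms preserve disjointness.
-/

/-- A (Riesz) ideal of an ordered real vector space: a submodule `I` such that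
`|x| ≤ |y|` and `y ∈ I` imply `x ∈ I`. -/
def IsRieszIdeal {E : Type*} [AddCommGroup E] [Lattice E] [Module ℝ E]
    (I : Submodule ℝ E) : Prop :=
  ∀ x y : E, |x| ≤ |y| → y ∈ I → x ∈ I

/-- A band: an ideal closed under suprema of its subsets (when they exist in `E`). -/
def IsBand {E : Type*} [AddCommGroup E] [Lattice E] [Module ℝ E]
    (B : Submodule ℝ E) : Prop :=
  IsRieszIdeal B ∧ ∀ (D : Set E) (x : E), D ⊆ (B : Set E) → IsLUB D x → x ∈ B

/-- The disjoint complement of a set `D`. -/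
def disjComplement {E : Type*} [AddCommGroup E] [Lattice E] (D : Set E) : Set E :=
  {x : E | ∀ y ∈ D, |x| ⊓ |y| = 0}

/-- A projection band: a band `B` with `E = B ⊕ Bᵈ`. -/
def IsProjectionBand {E : Type*} [AddCommGroup E] [Lattice E] [Module ℝ E]
    (B : Submodule ℝ E) : Prop :=
  IsBand B ∧ ∀ x : E, ∃ y ∈ B, ∃ z ∈ disjComplement (B : Set E), x = y + z

/-- An order direct sum decomposition `E = L ⊕ M`: every element decomposes uniquely
as a sum of an element of `L` and an element of `M`, and an element is positive iff
both its components are positive. -/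
def IsOrderDecomposition {E : Type*} [AddCommGroup E] [Lattice E] [Module ℝ E]
    (L M : Submodule ℝ E) : Prop :=
  (∀ x : E, ∃ y ∈ L, ∃ z ∈ M, x = y + z) ∧
  (∀ x : E, x ∈ L → x ∈ M → x = 0) ∧
  (∀ y z : E, y ∈ L → z ∈ M → (0 ≤ y + z ↔ 0 ≤ y ∧ 0 ≤ z))

/-- A homomorphism `ρ : G →* (E ≃ₗ[ℝ] E)` is a positive representation when each
`ρ s` is an order isomorphism (hence a lattice automorphism). -/
def IsPositiveRep {E : Type*} [AddCommGroup E] [Lattice E] [Module ℝ E]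
    {G : Type*} [Group G] (ρ : G →* (E ≃ₗ[ℝ] E)) : Prop :=
  ∀ (s : G) (x y : E), x ≤ y ↔ ρ s x ≤ ρ s y

/-- A submodule is `ρ`-invariant if it is mapped into itself by every `ρ s`. -/
def InvariantSubmodule {E : Type*} [AddCommGroup E] [Lattice E] [Module ℝ E]
    {G : Type*} [Group G] (ρ : G →* (E ≃ₗ[ℝ] E)) (B : Submodule ℝ E) : Prop :=
  ∀ (s : G), ∀ x ∈ B, ρ s x ∈ B

/-- `ρ` is order indecomposable if the only `ρ`-invariant order direct sum
decompositions `E = L ⊕ M` are the trivial ones. -/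
def OrderIndecomposable {E : Type*} [AddCommGroup E] [Lattice E] [Module ℝ E]
    {G : Type*} [Group G] (ρ : G →* (E ≃ₗ[ℝ] E)) : Prop :=
  ∀ L M : Submodule ℝ E, IsOrderDecomposition L M →
    InvariantSubmodule ρ L → InvariantSubmodule ρ M → L = ⊥ ∨ L = ⊤

/-- `ρ` is projection band irreducible if the only `ρ`-invariant projection bands
are `{0}` and `E`. -/
def ProjectionBandIrreducible {E : Type*} [AddCommGroup E] [Lattice E] [Module ℝ E]
    {G : Type*} [Group G] (ρ : G →* (E ≃ₗ[ℝ] E)) : Prop :=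
  ∀ B : Submodule ℝ E, IsProjectionBand B → InvariantSubmodule ρ B → B = ⊥ ∨ B = ⊤

section LatticeOrderedGroup

variable {E : Type*} [AddCommGroup E] [Lattice E]

theorem map_abs_of_supHomClass {F H : Type*} [AddCommGroup F] [Lattice F] [FunLike H E F]
    [SupHomClass H E F] [AddMonoidHomClass H E F] (f : H) (x : E) : f |x| = |f x| := by
  rw [abs, abs, map_sup, map_neg]

theorem map_mem_disjComplement_image {F H : Type*} [AddCommGroup F] [Lattice F] [FunLike H E F]
    [LatticeHomClass H E F] [AddMonoidHomClass H E F] (f : H) {D : Set E} {x : E}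
    (hx : x ∈ disjComplement D) : f x ∈ disjComplement (f '' D) := by
  rintro _ ⟨y, hy, rfl⟩
  rw [← map_abs_of_supHomClass, ← map_abs_of_supHomClass, ← map_inf, hx y hy, map_zero]

variable [IsOrderedAddMonoid E]

theorem abs_inf_abs_nonneg (x y : E) : 0 ≤ |x| ⊓ |y| :=
  le_inf (abs_nonneg x) (abs_nonneg y)

theorem add_inf_le_inf_add_inf {a b c : E} (ha : 0 ≤ a) (hb : 0 ≤ b) (hc : 0 ≤ c) :
    (a + b) ⊓ c ≤ a ⊓ c + b ⊓ c := by
  have le_left : (a + b) ⊓ c ≤ a ⊓ c + b := by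
    rw [inf_add]
    exact inf_le_inf_left _ (le_add_of_nonneg_right hb)
  have le_right : (a + b) ⊓ c ≤ a ⊓ c + c :=
    inf_le_right.trans (le_add_of_nonneg_left (le_inf ha hc))
  rw [add_inf]
  exact le_inf le_left le_right

theorem nonneg_of_add_nonneg_of_abs_inf_abs_eq_zero {y z : E} (hyz : |y| ⊓ |z| = 0)
    (h : 0 ≤ y + z) : 0 ≤ y := by
  have neg_le_abs_right : -y ≤ |z| := (neg_le_iff_add_nonneg'.2 h).trans (le_abs_self z)
  exact neg_nonpos.1 ((le_inf (neg_le_abs y) neg_le_abs_right).trans hyz.le)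

theorem eq_zero_of_mem_of_mem_disjComplement {D : Set E} {x : E} (hx : x ∈ D)
    (hx' : x ∈ disjComplement D) : x = 0 := by
  have abs_nonpos : |x| ≤ 0 := inf_idem |x| ▸ (hx' x hx).le
  exact le_antisymm ((le_abs_self x).trans abs_nonpos)
    (neg_nonpos.1 ((neg_le_abs x).trans abs_nonpos))

end LatticeOrderedGroup

section OrderedModule

variable {𝕜 E : Type*} [AddCommGroup E] [Lattice E]

theorem abs_smul_le [Ring 𝕜] [LinearOrder 𝕜] [IsOrderedAddMonoid 𝕜] [Module 𝕜 E] [PosSMulMono 𝕜 E]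
    (c : 𝕜) (x : E) : |c • x| ≤ |c| • |x| := by
  have smul_le {d : 𝕜} (hd : 0 ≤ d) : |d • x| ≤ d • |x| :=
    abs_le'.2 ⟨smul_le_smul_of_nonneg_left (le_abs_self x) hd,
      smul_neg d x ▸ smul_le_smul_of_nonneg_left (neg_le_abs x) hd⟩
  rcases abs_choice c with hc | hc
  · simpa only [hc] using smul_le (hc ▸ abs_nonneg c)
  · simpa only [hc, neg_smul, abs_neg] using smul_le (hc ▸ abs_nonneg c : 0 ≤ -c)

variable [IsOrderedAddMonoid E] [Field 𝕜] [LinearOrder 𝕜] [IsStrictOrderedRing 𝕜] [Module 𝕜 E]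
  [PosSMulMono 𝕜 E]

theorem smul_mem_disjComplement {D : Set E} {x : E} (hx : x ∈ disjComplement D) (c : 𝕜) :
    c • x ∈ disjComplement D := by
  intro y hy
  have hpos : 0 < |c| + 1 := by positivity
  have abs_smul_le_left : |c • x| ≤ (|c| + 1) • |x| :=
    (abs_smul_le c x).trans
      (smul_le_smul_of_nonneg_right (le_add_of_nonneg_right zero_le_one) (abs_nonneg x))
  have le_right : |y| ≤ (|c| + 1) • |y| :=
    le_smul_of_one_le_left (abs_nonneg y) (le_add_of_nonneg_left (abs_nonneg c))
  refine le_antisymm ?_ (abs_inf_abs_nonneg _ _)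
  calc |c • x| ⊓ |y| ≤ (|c| + 1) • |x| ⊓ (|c| + 1) • |y| := inf_le_inf abs_smul_le_left le_right
    _ = (|c| + 1) • (|x| ⊓ |y|) := (map_inf (OrderIso.smulRight hpos) |x| |y|).symm
    _ = 0 := by rw [hx y hy, smul_zero]

variable (𝕜) in
/-- The disjoint complement of `D` as a linear subspace, so that it can serve as a summand of a
decomposition of `E`. -/
def disjComplementSubmodule (D : Set E) : Submodule 𝕜 E where
  carrier := disjComplement D
  zero_mem' y _ := by rw [abs_zero, inf_eq_left.2 (abs_nonneg y)]
  add_mem' {x z} hx hz y hy := by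
    refine le_antisymm ?_ (abs_inf_abs_nonneg _ _)
    calc |x + z| ⊓ |y| ≤ (|x| + |z|) ⊓ |y| := inf_le_inf_right _ (abs_add_le x z)
      _ ≤ |x| ⊓ |y| + |z| ⊓ |y| :=
        add_inf_le_inf_add_inf (abs_nonneg x) (abs_nonneg z) (abs_nonneg y)
      _ = 0 := by rw [hx y hy, hz y hy, add_zero]
  smul_mem' c _ hx := smul_mem_disjComplement hx c

end OrderedModule

section OrderDecomposition

variable {E : Type*} [AddCommGroup E] [Lattice E] [Module ℝ E] {L M : Submodule ℝ E}

namespace IsOrderDecomposition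

theorem symm (h : IsOrderDecomposition L M) : IsOrderDecomposition M L := by
  obtain ⟨exists_add, eq_zero, nonneg_iff⟩ := h
  refine ⟨fun x ↦ ?_, fun x hM hL ↦ eq_zero x hL hM, fun y z hy hz ↦ ?_⟩
  · obtain ⟨y, hy, z, hz, rfl⟩ := exists_add x
    exact ⟨z, hz, y, hy, add_comm y z⟩
  · rw [add_comm, nonneg_iff z y hz hy, and_comm]

variable [IsOrderedAddMonoid E]

theorem add_le_add_iff (h : IsOrderDecomposition L M) {a a' b b' : E} (ha : a ∈ L) (ha' : a' ∈ L)
    (hb : b ∈ M) (hb' : b' ∈ M) : a + b ≤ a' + b' ↔ a ≤ a' ∧ b ≤ b' := by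
  rw [← sub_nonneg, add_sub_add_comm, h.2.2 _ _ (L.sub_mem ha' ha) (M.sub_mem hb' hb),
    sub_nonneg, sub_nonneg]

theorem add_le_iff (h : IsOrderDecomposition L M) {a b u : E} (ha : a ∈ L) (hb : b ∈ M)
    (hu : u ∈ L) : a + b ≤ u ↔ a ≤ u ∧ b ≤ 0 := by
  simpa only [add_zero] using h.add_le_add_iff ha hu hb M.zero_mem

theorem le_add_iff (h : IsOrderDecomposition L M) {a b u : E} (ha : a ∈ L) (hb : b ∈ M)
    (hu : u ∈ L) : u ≤ a + b ↔ u ≤ a ∧ 0 ≤ b := by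
  simpa only [add_zero] using h.add_le_add_iff hu ha M.zero_mem hb

theorem mem_of_abs_le (h : IsOrderDecomposition L M) {x u : E} (hu : u ∈ L) (hxu : |x| ≤ u) :
    x ∈ L := by
  obtain ⟨a, ha, b, hb, rfl⟩ := h.1 x
  have b_nonpos : b ≤ 0 := ((h.add_le_iff ha hb hu).1 ((le_abs_self _).trans hxu)).2
  have b_nonneg : 0 ≤ b := by
    have neg_le : -a + -b ≤ u := neg_add a b ▸ (neg_le_abs _).trans hxu
    exact neg_nonpos.1 ((h.add_le_iff (L.neg_mem ha) (M.neg_mem hb) hu).1 neg_le).2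
  rwa [le_antisymm b_nonpos b_nonneg, add_zero]

theorem abs_mem (h : IsOrderDecomposition L M) {x : E} (hx : x ∈ L) : |x| ∈ L := by
  obtain ⟨a, ha, b, hb, hab⟩ := h.1 |x|
  obtain ⟨le_a, b_nonneg⟩ := (h.le_add_iff ha hb hx).1 (hab ▸ le_abs_self x)
  have neg_le_a : -x ≤ a := ((h.le_add_iff ha hb (L.neg_mem hx)).1 (hab ▸ neg_le_abs x)).1
  have abs_le_a : |x| ≤ a := abs_le'.2 ⟨le_a, neg_le_a⟩
  have a_le_abs : a ≤ |x| := hab ▸ le_add_of_nonneg_right b_nonneg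
  rwa [le_antisymm abs_le_a a_le_abs]

theorem isRieszIdeal (h : IsOrderDecomposition L M) : IsRieszIdeal L :=
  fun _ _ hxy hy ↦ h.mem_of_abs_le (h.abs_mem hy) hxy

theorem isBand (h : IsOrderDecomposition L M) : IsBand L := by
  refine ⟨h.isRieszIdeal, fun D x hDL hx ↦ ?_⟩
  obtain ⟨a, ha, b, hb, rfl⟩ := h.1 x
  have le_and_nonneg {d : E} (hd : d ∈ D) : d ≤ a ∧ 0 ≤ b :=
    (h.le_add_iff ha hb (hDL hd)).1 (hx.1 hd)
  have b_nonpos : b ≤ 0 := add_le_iff_nonpos_right a |>.1 (hx.2 fun d hd ↦ (le_and_nonneg hd).1)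
  -- Comparing with the upper bound `a + b + b`, instead of with a point of `D`, covers `D = ∅`.
  have b_nonneg : 0 ≤ b := le_add_iff_nonneg_right (a + b) |>.1 <|
    hx.2 fun d hd ↦ (hx.1 hd).trans (le_add_of_nonneg_right (le_and_nonneg hd).2)
  rwa [le_antisymm b_nonpos b_nonneg, add_zero]

theorem subset_disjComplement (h : IsOrderDecomposition L M) :
    (M : Set E) ⊆ disjComplement (L : Set E) := by
  intro z hz y hy
  have abs_inf_eq : |(|z| ⊓ |y|)| = |z| ⊓ |y| := abs_of_nonneg (abs_inf_abs_nonneg z y)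
  exact h.2.1 _ (h.mem_of_abs_le (h.abs_mem hy) (abs_inf_eq.trans_le inf_le_right))
    (h.symm.mem_of_abs_le (h.symm.abs_mem hz) (abs_inf_eq.trans_le inf_le_left))

theorem isProjectionBand (h : IsOrderDecomposition L M) : IsProjectionBand L := by
  refine ⟨h.isBand, fun x ↦ ?_⟩
  obtain ⟨y, hy, z, hz, hyz⟩ := h.1 x
  exact ⟨y, hy, z, h.subset_disjComplement hz, hyz⟩

end IsOrderDecomposition

theorem IsProjectionBand.isOrderDecomposition [IsOrderedAddMonoid E] [PosSMulMono ℝ E]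
    {B : Submodule ℝ E} (h : IsProjectionBand B) :
    IsOrderDecomposition B (disjComplementSubmodule ℝ (B : Set E)) := by
  refine ⟨h.2, fun x ↦ eq_zero_of_mem_of_mem_disjComplement, fun y z hy hz ↦
    ⟨fun hyz ↦ ⟨?_, ?_⟩, fun hyz ↦ add_nonneg hyz.1 hyz.2⟩⟩
  · exact nonneg_of_add_nonneg_of_abs_inf_abs_eq_zero (inf_comm |y| |z| ▸ hz y hy) hyz
  · exact nonneg_of_add_nonneg_of_abs_inf_abs_eq_zero (hz y hy) (add_comm y z ▸ hyz)

end OrderDecomposition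

section PositiveRepresentation

variable {G E : Type*} [Group G] [AddCommGroup E] [Lattice E] [Module ℝ E]
  {ρ : G →* (E ≃ₗ[ℝ] E)} {B : Submodule ℝ E}

/-- The operator `ρ s` of a positive representation as an isomorphism of ordered groups, which
makes the library's results on lattice homomorphisms available for it. -/
def IsPositiveRep.orderAddMonoidIso (hρ : IsPositiveRep ρ) (s : G) : E ≃+o E :=
  { (ρ s).toAddEquiv with map_le_map_iff' := (hρ s _ _).symm }

theorem InvariantSubmodule.image_eq (hB : InvariantSubmodule ρ B) (s : G) :
    ρ s '' B = (B : Set E) := by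
  refine Set.Subset.antisymm (Set.image_subset_iff.2 (hB s)) fun x hx ↦
    ⟨ρ s⁻¹ x, hB s⁻¹ x hx, ?_⟩
  rw [← LinearEquiv.mul_apply, ← map_mul, mul_inv_cancel, map_one, LinearEquiv.coe_one, id]

theorem InvariantSubmodule.disjComplementSubmodule [IsOrderedAddMonoid E] [PosSMulMono ℝ E]
    (hB : InvariantSubmodule ρ B) (hρ : IsPositiveRep ρ) :
    InvariantSubmodule ρ (disjComplementSubmodule ℝ (B : Set E)) := by
  intro s x hx
  have map_mem : ρ s x ∈ disjComplement (ρ s '' B) :=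
    map_mem_disjComplement_image (hρ.orderAddMonoidIso s) hx
  rwa [hB.image_eq s] at map_mem

end PositiveRepresentation

/-- A positive representation of a group `G` in a Riesz space `E` is order
indecomposable if and only if it is projection band irreducible. -/
theorem stmt1 {G E : Type*} [Group G] [AddCommGroup E] [Lattice E] [Module ℝ E]
    (hadd : ∀ x y z : E, x ≤ y → x + z ≤ y + z)
    (hsmul : ∀ (c : ℝ) (x : E), 0 ≤ c → 0 ≤ x → 0 ≤ c • x)
    (ρ : G →* (E ≃ₗ[ℝ] E)) (hρ : IsPositiveRep ρ) :
    OrderIndecomposable ρ ↔ ProjectionBandIrreducible ρ := by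
  have : IsOrderedAddMonoid E := { add_le_add_left := fun x y hxy z ↦ hadd x y z hxy }
  have : PosSMulMono ℝ E := .of_smul_nonneg fun c hc x hx ↦ hsmul c x hc hx
  constructor
  · intro indecomposable B hB invariant
    exact indecomposable B (disjComplementSubmodule ℝ B) hB.isOrderDecomposition invariant
      (invariant.disjComplementSubmodule hρ)
  · intro irreducible L M hLM invariant _
    exact irreducible L hLM.isProjectionBand invariant
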